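/- Let f¹, …, f^T : S → ℝ be convex differentiable functions on a closed convex set S ⊆ ℝ^d with ‖∇f^t(x)‖ ≤ G for all t and x ∈ S, and let D bound the diameter of S. Define x^{t+1} = Π_S(x^t − η∇f^t(x^t)) with step size η = D/(G√T), where Π_S is Euclidean projection onto S. Then Σ_{t=1}^T f^t(x^t) ≤ min_{x∈S} Σ_{t=1}^T f^t(x) + DG√T. -/

import Mathlib

open Finset

/-!
The squared distance to a comparator `y` is a potential. A subgradient step at `x` changes it by
`-2η⟪g, x - y⟫ + η²‖g‖² ≤ -2η (f x - f y) + η²‖g‖²`, and projecting onto a convex set containing `y`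
can only decrease it. Telescoping bounds the regret by `‖x₁ - y‖² / (2η) + η/2 * ∑ ‖gₜ‖²`, whose two
terms are at most `D² / (2η)` and `ηTG²/2`; they balance at `η = D / (G√T)`, each being `DG√T/2`.
-/

section NearestPoint

/-- `p` is a metric projection of `u` onto `S`. This is a relation rather than a map: neither
existence nor uniqueness is presupposed. -/
def IsNearestPoint {α : Type*} [PseudoMetricSpace α] (S : Set α) (u p : α) : Prop :=
  p ∈ S ∧ ∀ y ∈ S, dist p u ≤ dist y u

variable {E : Type*} [NormedAddCommGroup E] [InnerProductSpace ℝ E] {S : Set E} {u p y : E}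

theorem IsNearestPoint.inner_sub_sub_nonpos (hp : IsNearestPoint S u p) (hS : Convex ℝ S)
    (hy : y ∈ S) : inner ℝ (u - p) (y - p) ≤ 0 := by
  have : Nonempty S := ⟨⟨p, hp.1⟩⟩
  have hinf : ‖u - p‖ = ⨅ w : S, ‖u - w‖ := by
    refine le_antisymm (le_ciInf fun w ↦ ?_) ?_
    · simpa only [dist_eq_norm, norm_sub_rev] using hp.2 w w.2
    · exact ciInf_le (f := fun w : S ↦ ‖u - w‖)
        ⟨0, Set.forall_mem_range.2 fun _ ↦ norm_nonneg _⟩ ⟨p, hp.1⟩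
  exact (norm_eq_iInf_iff_real_inner_le_zero hS hp.1).1 hinf y hy

theorem IsNearestPoint.norm_sub_sq_add_norm_sub_sq_le (hp : IsNearestPoint S u p)
    (hS : Convex ℝ S) (hy : y ∈ S) : ‖u - p‖ ^ 2 + ‖p - y‖ ^ 2 ≤ ‖u - y‖ ^ 2 := by
  have hcos : ‖u - y‖ ^ 2 = ‖u - p‖ ^ 2 - 2 * inner ℝ (u - p) (y - p) + ‖p - y‖ ^ 2 := by
    rw [norm_sub_rev p y, ← norm_sub_sq_real, sub_sub_sub_cancel_right]
  linarith [hp.inner_sub_sub_nonpos hS hy]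

end NearestPoint

section Subgradient

variable {E : Type*} [NormedAddCommGroup E] [InnerProductSpace ℝ E]

/-- `g` is a subgradient at `x` of the restriction of `f` to `S`. -/
def IsSubgradientOn (f : E → ℝ) (S : Set E) (g x : E) : Prop :=
  ∀ y ∈ S, inner ℝ g (y - x) ≤ f y - f x

theorem isSubgradientOn_of_hasGradientWithinAt [CompleteSpace E] {f : E → ℝ} {S : Set E} {g x : E}
    (hf : ConvexOn ℝ S f) (hg : HasGradientWithinAt f g S x) (hx : x ∈ S) :
    IsSubgradientOn f S g x := by
  intro y hy
  let line : ℝ →ᵃ[ℝ] E := AffineMap.lineMap x y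
  have hderiv : HasDerivWithinAt (f ∘ line) (inner ℝ g (y - x)) (line ⁻¹' S) 0 := by
    simpa using hg.hasFDerivWithinAt.comp_hasDerivWithinAt_of_eq (0 : ℝ)
      AffineMap.hasDerivWithinAt_lineMap (Set.mapsTo_preimage line S)
      (AffineMap.lineMap_apply_zero x y).symm
  simpa [line, slope_def_field] using (hf.comp_affineMap line).le_slope_of_hasDerivWithinAt
    (by simpa [line] using hx) (by simpa [line] using hy) zero_lt_one hderiv

theorem IsSubgradientOn.two_mul_sub_le {f : E → ℝ} {S : Set E} {g x p y : E} {η : ℝ}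
    (hg : IsSubgradientOn f S g x) (hS : Convex ℝ S) (hη : 0 ≤ η)
    (hp : IsNearestPoint S (x - η • g) p) (hy : y ∈ S) :
    2 * η * (f x - f y) ≤ ‖x - y‖ ^ 2 - ‖p - y‖ ^ 2 + η ^ 2 * ‖g‖ ^ 2 := by
  have hproj : ‖p - y‖ ^ 2 ≤ ‖x - η • g - y‖ ^ 2 :=
    (le_add_of_nonneg_left (sq_nonneg _)).trans (hp.norm_sub_sq_add_norm_sub_sq_le hS hy)
  have hexpand :
      ‖x - η • g - y‖ ^ 2 = ‖x - y‖ ^ 2 + 2 * η * inner ℝ g (y - x) + η ^ 2 * ‖g‖ ^ 2 := by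
    rw [sub_right_comm, norm_sub_sq_real, real_inner_smul_right, norm_smul, mul_pow,
      Real.norm_eq_abs, sq_abs, real_inner_comm, ← neg_sub x y, inner_neg_right]
    ring
  have hsub : 2 * η * inner ℝ g (y - x) ≤ 2 * η * (f y - f x) :=
    mul_le_mul_of_nonneg_left (hg y hy) (mul_nonneg zero_le_two hη)
  linarith

end Subgradient

section Regret

variable {E : Type*} [NormedAddCommGroup E] [InnerProductSpace ℝ E] {S : Set E}
  {f : ℕ → E → ℝ} {x g : ℕ → E} {y : E} {m n : ℕ}

theorem sum_two_mul_regret_le (hS : Convex ℝ S) (hmn : m ≤ n) {η : ℕ → ℝ}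
    (hη : ∀ t ∈ Icc m n, 0 ≤ η t)
    (hsub : ∀ t ∈ Icc m n, IsSubgradientOn (f t) S (g t) (x t))
    (hproj : ∀ t ∈ Icc m n, IsNearestPoint S (x t - η t • g t) (x (t + 1))) (hy : y ∈ S) :
    ∑ t ∈ Icc m n, 2 * η t * (f t (x t) - f t y) ≤
      ‖x m - y‖ ^ 2 - ‖x (n + 1) - y‖ ^ 2 + ∑ t ∈ Icc m n, η t ^ 2 * ‖g t‖ ^ 2 := by
  calc ∑ t ∈ Icc m n, 2 * η t * (f t (x t) - f t y)
      ≤ ∑ t ∈ Icc m n, (‖x t - y‖ ^ 2 - ‖x (t + 1) - y‖ ^ 2 + η t ^ 2 * ‖g t‖ ^ 2) :=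
        sum_le_sum fun t ht ↦ (hsub t ht).two_mul_sub_le hS (hη t ht) (hproj t ht) hy
    _ = ‖x m - y‖ ^ 2 - ‖x (n + 1) - y‖ ^ 2 + ∑ t ∈ Icc m n, η t ^ 2 * ‖g t‖ ^ 2 := by
        rw [sum_add_distrib, ← neg_sub (‖x (n + 1) - y‖ ^ 2),
          ← sum_Icc_sub hmn fun t ↦ ‖x t - y‖ ^ 2, ← sum_neg_distrib]
        simp only [neg_sub]

theorem regret_le_of_constant_step (hS : Convex ℝ S) (hmn : m ≤ n) {η : ℝ} (hη : 0 < η)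
    (hsub : ∀ t ∈ Icc m n, IsSubgradientOn (f t) S (g t) (x t))
    (hproj : ∀ t ∈ Icc m n, IsNearestPoint S (x t - η • g t) (x (t + 1))) (hy : y ∈ S) :
    ∑ t ∈ Icc m n, f t (x t) - ∑ t ∈ Icc m n, f t y ≤
      ‖x m - y‖ ^ 2 / (2 * η) + η / 2 * ∑ t ∈ Icc m n, ‖g t‖ ^ 2 := by
  have hweighted := sum_two_mul_regret_le hS hmn (fun _ _ ↦ hη.le) hsub hproj hy
  rw [← mul_sum, ← mul_sum, sum_sub_distrib] at hweighted
  refine le_of_mul_le_mul_left ?_ (mul_pos zero_lt_two hη)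
  calc 2 * η * (∑ t ∈ Icc m n, f t (x t) - ∑ t ∈ Icc m n, f t y)
      ≤ ‖x m - y‖ ^ 2 + η ^ 2 * ∑ t ∈ Icc m n, ‖g t‖ ^ 2 := by
        linarith [sq_nonneg ‖x (n + 1) - y‖]
    _ = 2 * η * (‖x m - y‖ ^ 2 / (2 * η) + η / 2 * ∑ t ∈ Icc m n, ‖g t‖ ^ 2) := by
        field_simp

theorem stmt_12_general (hS : Convex ℝ S) {D G : ℝ} (hD : 0 < D) (hG : 0 < G) {T : ℕ} (hT : 1 ≤ T)
    (hsub : ∀ t ∈ Icc 1 T, IsSubgradientOn (f t) S (g t) (x t))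
    (hbound : ∀ t ∈ Icc 1 T, ‖g t‖ ≤ G) {η : ℝ} (hη : η = D / (G * √T))
    (hproj : ∀ t ∈ Icc 1 T, IsNearestPoint S (x t - η • g t) (x (t + 1)))
    (hy : y ∈ S) (hdist : dist (x 1) y ≤ D) :
    ∑ t ∈ Icc 1 T, f t (x t) ≤ ∑ t ∈ Icc 1 T, f t y + D * G * √T := by
  have hT_pos : (0 : ℝ) < T := by exact_mod_cast hT
  have hη_pos : 0 < η := by rw [hη]; positivity
  have hgrad_sq : ∑ t ∈ Icc 1 T, ‖g t‖ ^ 2 ≤ T * G ^ 2 := by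
    simpa using sum_le_card_nsmul (Icc 1 T) _ (G ^ 2) fun t ht ↦
      pow_le_pow_left₀ (norm_nonneg _) (hbound t ht) 2
  have hregret : ∑ t ∈ Icc 1 T, f t (x t) - ∑ t ∈ Icc 1 T, f t y ≤ D * G * √T := calc
    _ ≤ ‖x 1 - y‖ ^ 2 / (2 * η) + η / 2 * ∑ t ∈ Icc 1 T, ‖g t‖ ^ 2 :=
        regret_le_of_constant_step hS hT hη_pos hsub hproj hy
    _ ≤ D ^ 2 / (2 * η) + η / 2 * (T * G ^ 2) := by
        rw [← dist_eq_norm]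
        gcongr
    _ = D * G * √T := by
        rw [hη]
        field_simp
        rw [Real.sq_sqrt hT_pos.le]
        ring
  linarith

end Regret

/-- Online gradient descent regret bound (Zinkevich). With bounded
gradients `‖∇fᵗ‖ ≤ G`, diameter bound `D`, step size `η = D/(G√T)`, and iterates
obtained by projected gradient steps, `Σₜ fᵗ(xᵗ) ≤ min_{x∈S} Σₜ fᵗ(x) + DG√T`. -/
theorem stmt_12
    (d : ℕ) (S : Set (EuclideanSpace ℝ (Fin d)))
    (hSne : S.Nonempty) (hSclosed : IsClosed S) (hSconvex : Convex ℝ S)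
    (D G : ℝ) (hD : 0 < D) (hG : 0 < G)
    (hdiam : ∀ x ∈ S, ∀ y ∈ S, dist x y ≤ D)
    (T : ℕ) (hT : 1 ≤ T)
    (f : ℕ → EuclideanSpace ℝ (Fin d) → ℝ)
    (hconv : ∀ t, ConvexOn ℝ S (f t))
    (g : ℕ → EuclideanSpace ℝ (Fin d) → EuclideanSpace ℝ (Fin d))
    (hgrad : ∀ t x, HasGradientAt (f t) (g t x) x)
    (hGbound : ∀ t, ∀ x ∈ S, ‖g t x‖ ≤ G)
    (η : ℝ) (hη : η = D / (G * Real.sqrt T))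
    (x : ℕ → EuclideanSpace ℝ (Fin d)) (hx1 : x 1 ∈ S)
    -- x^{t+1} = Π_S(x^t − η ∇f^t(x^t)): the Euclidean projection onto S
    (hproj : ∀ t, x (t + 1) ∈ S ∧
      ∀ y ∈ S, dist (x (t + 1)) (x t - η • g t (x t)) ≤ dist y (x t - η • g t (x t))) :
    ∀ y ∈ S, ∑ t ∈ Finset.Icc 1 T, f t (x t) ≤
      (∑ t ∈ Finset.Icc 1 T, f t y) + D * G * Real.sqrt T := by
  have hmem : ∀ t, 1 ≤ t → x t ∈ S := Nat.le_induction hx1 fun t _ _ ↦ (hproj t).1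
  have hsub : ∀ t ∈ Icc 1 T, IsSubgradientOn (f t) S (g t (x t)) (x t) := fun t ht ↦
    isSubgradientOn_of_hasGradientWithinAt (hconv t) (hgrad t (x t)).hasFDerivAt.hasFDerivWithinAt
      (hmem t (mem_Icc.1 ht).1)
  exact fun y hy ↦ stmt_12_general hSconvex hD hG hT hsub
    (fun t ht ↦ hGbound t (x t) (hmem t (mem_Icc.1 ht).1)) hη (fun t _ ↦ hproj t) hy
    (hdiam _ hx1 y hy)
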